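/- arXiv:2605.02632 — 2 statements merged into one kernel-verified Lean document; each statement's English description precedes it below -/
import Mathlib

section
/- Let L = ℚ(ζ₅) be the fifth cyclotomic field. The only pair (x, y) ∈ L × L satisfying −5y² = x·(x² + 22x + 125) is (x, y) = (0, 0). -/
/-- 2-adic exclusion -/
theorem loc2_gen {R : Type*} [CommRing R] [IsDomain R] (h2 : Prime (2 : R))
    (d ψ θ κ : R) (hψ : ψ * θ = 1) (hd : d = ψ ^ 2 - 2 * κ) (hκ : ¬ 2 ∣ κ)
    (hg : ¬ 2 ∣ 1 + κ * θ ^ 2 + (κ * θ ^ 2) ^ 3)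
    (M e n : R) (hMe : ¬ (2 ∣ M ∧ 2 ∣ e))
    (h : d * n ^ 2 = (d * M ^ 2 - 11 * e ^ 2) ^ 2 + 4 * e ^ 4) : False := by
  have h20 : (2 : R) ≠ 0 := h2.ne_zero
  have half : ∀ a b : R, 2 * a = 2 * b → a = b := fun a b hab => mul_left_cancel₀ h20 hab
  obtain ⟨A, hA⟩ : ∃ A, A = d * M ^ 2 - 11 * e ^ 2 := ⟨_, rfl⟩
  rw [← hA] at h
  obtain ⟨B, hB⟩ := h2.dvd_of_dvd_pow (n := 2) (a := A - ψ * n)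
    ⟨(d + κ) * n ^ 2 - 2 * e ^ 4 - ψ * A * n, by linear_combination -h + n ^ 2 * (-hd)⟩
  have hA2 : A = ψ * n + 2 * B := by linear_combination hB
  have hn : (2 : R) ∣ κ * n ^ 2 := ⟨-(ψ * n * B + B ^ 2 + e ^ 4), half _ _ (by
    rw [hA2, hd] at h
    linear_combination -h)⟩
  obtain ⟨m, rfl⟩ := h2.dvd_of_dvd_pow ((h2.dvd_or_dvd hn).resolve_left hκ)
  obtain ⟨a, ha⟩ : ∃ a, a = ψ * m + B := ⟨_, rfl⟩
  have hAa : A = 2 * a := by rw [hA2, ha]; ring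
  have h1 : d * m ^ 2 = a ^ 2 + e ^ 4 := by
    apply half; apply half
    rw [hAa] at h; linear_combination h
  have h3 : 2 * a = d * M ^ 2 - 11 * e ^ 2 := by rw [← hAa, hA]
  obtain ⟨t, ht⟩ := h2.dvd_of_dvd_pow (n := 2) (a := ψ * M - e)
    ⟨a + κ * M ^ 2 + 6 * e ^ 2 - ψ * M * e, by rw [hd] at h3; linear_combination -h3⟩
  have hM : M = θ * (e + 2 * t) := by linear_combination θ * ht - M * hψ
  obtain ⟨g, hgg⟩ : ∃ g, g = κ * θ ^ 2 := ⟨_, rfl⟩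
  have hdθ : d * θ ^ 2 = 1 - 2 * g := by
    rw [hd, hgg]; linear_combination (ψ * θ + 1) * hψ
  rw [← hgg] at hg
  have h4 : a = -(5 + g) * e ^ 2 + 2 * ((1 - 2 * g) * (e * t + t ^ 2)) := by
    apply half
    rw [h3, hM, ← sub_eq_zero]
    linear_combination (e + 2 * t) ^ 2 * hdθ
  obtain ⟨w, hw⟩ : ∃ w, w = (1 - 2 * g) * (e * t + t ^ 2) := ⟨_, rfl⟩
  rw [← hw] at h4
  obtain ⟨s, hs⟩ := h2.dvd_of_dvd_pow (n := 2) (a := ψ * m - (6 + g) * e ^ 2)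
    ⟨κ * m ^ 2 - ψ * m * (6 + g) * e ^ 2 + ((5 + g) ^ 2 + 1 + (5 + g)) * e ^ 4
      - 2 * (5 + g) * e ^ 2 * w + 2 * w ^ 2, by
      rw [hd, h4] at h1; linear_combination h1⟩
  have hm : m = θ * ((6 + g) * e ^ 2 + 2 * s) := by linear_combination θ * hs - m * hψ
  have h5 : (1 - 2 * g) * ((6 + g) * e ^ 2 + 2 * s) ^ 2 = a ^ 2 + e ^ 4 := by
    rw [← h1, ← hdθ, hm]; ring
  have h6 : (2 : R) ∣ (1 + g + g ^ 3) * e ^ 4 := by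
    rw [h4] at h5
    have := half _ ((1 + g + g ^ 3) * e ^ 4 + 2 * ((1 - 2 * g) * ((6 + g) * e ^ 2 * s + s ^ 2) + (5 + g) * e ^ 2 * w - w ^ 2 + (2 - 18 * g - 6 * g ^ 2 - g ^ 3) * e ^ 4 )) (show 2 * 0 = _ by linear_combination -h5)
    exact (dvd_add_left (Dvd.intro _ rfl)).mp (this ▸ dvd_zero (2 : R))
  have he := h2.dvd_of_dvd_pow ((h2.dvd_or_dvd h6).resolve_left hg)
  refine hMe ⟨?_, he⟩
  rw [hM]
  exact Dvd.dvd.mul_left (dvd_add he ⟨t, rfl⟩) _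

section abstractR
set_option linter.unusedSectionVars false
variable {R : Type*} [CommRing R] [IsDomain R] [IsPrincipalIdealRing R]

theorem even_of_sq_eq {l : R} (hl : Prime l) (n : ℕ) : ∀ c m : R, ¬ l ∣ m → c ^ 2 = l ^ n * m →
    Even n := by
  induction n using Nat.strong_induction_on with
  | _ n ih =>
    intro c m hm h
    match n, ih, h with
    | 0, _, _ => exact Even.zero
    | 1, _, h =>
      exfalso
      obtain ⟨d, rfl⟩ := hl.dvd_of_dvd_pow (n := 2) (a := c) ⟨m, by rw [h, pow_one]⟩
      exact hm ⟨d ^ 2, mul_left_cancel₀ hl.ne_zero (by linear_combination -h)⟩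
    | k + 2, ih, h =>
      obtain ⟨d, rfl⟩ := hl.dvd_of_dvd_pow (n := 2) (a := c) ⟨l ^ (k + 1) * m, by rw [h]; ring⟩
      have := ih k (by omega) d m hm (mul_left_cancel₀ (pow_ne_zero 2 hl.ne_zero)
        (by linear_combination h))
      exact this.add (by decide)

/-- odd power of `l` in `a` is impossible -/
theorem even_at_five {l : R} (hl : Prime l) (h5 : Associated (l ^ 4) (5 : R))
    (hF : ∀ a : R, l ∣ a ^ 5 - a) (a b c : R) (k : ℕ) (hla : ¬ l ∣ a) (hlb : ¬ l ∣ b)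
    (hc : c ^ 2 = l ^ k * a * b * ((l ^ k * a) ^ 2 - 22 * (l ^ k * a) * b + 125 * b ^ 2)) :
    Even k := by
  obtain ⟨u, hu⟩ := h5
  have hlab : ¬ l ∣ a * b := fun h => (hl.dvd_or_dvd h).elim hla hlb
  have hl0 := hl.ne_zero
  have h125 : (125 : R) = l ^ 12 * u ^ 3 := by
    calc (125 : R) = 5 ^ 3 := by norm_num
      _ = _ := by rw [← hu]; ring
  have hpow : ∀ z : R, ¬ l ∣ z → l ∣ z ^ 4 - 1 := fun z hz => by
    have : l ∣ z * (z ^ 4 - 1) := by convert hF z using 1; ring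
    exact (hl.dvd_or_dvd this).resolve_left hz
  have hl5 : l ∣ 5 := ⟨l ^ 3 * u, by rw [← hu]; ring⟩
  have hl2 : ¬ l ∣ 2 := fun h => hl.not_isUnit (isUnit_of_dvd_one (by
    have := dvd_sub hl5 (h.mul_left 2); norm_num at this; exact this))
  have hl22 : ¬ l ∣ 22 := fun h => hl2 (by
    obtain ⟨x, hx⟩ := h
    obtain ⟨y, hy⟩ := hl5
    exact ⟨x - 4 * y, by linear_combination hx - 4 * hy⟩)
  rcases lt_trichotomy k 12 with hk | rfl | hk
  · rcases Nat.eq_zero_or_pos k with rfl | hk0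
    · exact Even.zero
    exfalso
    obtain ⟨i, rfl⟩ : ∃ i, k = i + 1 := ⟨k - 1, by omega⟩
    obtain ⟨j, hj⟩ : ∃ j, 12 = i + 1 + 1 + j := ⟨12 - (i + 2), by omega⟩
    have hcd : l ^ (i + 1) ∣ c := by
      rw [← IsIntegrallyClosed.pow_dvd_pow_iff (n := 2) two_ne_zero]
      refine ⟨a * b * (l ^ (i + 1) * a ^ 2 - 22 * a * b + l * l ^ j * u ^ 3 * b ^ 2), ?_⟩
      rw [hc, h125, hj]; ring
    obtain ⟨d, rfl⟩ := hcd
    have hd : d ^ 2 = a * b * (l ^ (i + 1) * a ^ 2 - 22 * a * b + l * l ^ j * u ^ 3 * b ^ 2) := by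
      apply mul_left_cancel₀ (pow_ne_zero 2 (pow_ne_zero (i + 1) hl0))
      rw [h125, hj] at hc
      linear_combination hc
    have hd1 : l ∣ d ^ 2 + 22 * (a * b) ^ 2 :=
      ⟨a * b * (l ^ i * a ^ 2 + l ^ j * u ^ 3 * b ^ 2), by rw [hd]; ring⟩
    have hnd : ¬ l ∣ d := fun h => by
      have : l ∣ 22 * (a * b) ^ 2 := by
        have := dvd_sub hd1 (dvd_pow h (two_ne_zero)); simpa using this
      rcases hl.dvd_or_dvd this with h | h
      · exact hl22 h
      · exact hlab (hl.dvd_of_dvd_pow h)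
    obtain ⟨z1, h1⟩ := hpow d hnd
    obtain ⟨z2, h2⟩ := hpow _ hlab
    obtain ⟨z3, h3⟩ := hd1
    obtain ⟨z4, h4⟩ := hl5
    generalize a * b = t at *
    exact hl2 ⟨97 * z4 + 484 * z2 - z1 + z3 * (d ^ 2 - 22 * t ^ 2), by
      linear_combination 97 * h4 + 484 * h2 - h1 + (d ^ 2 - 22 * t ^ 2) * h3⟩
  · decide
  · obtain ⟨j, rfl⟩ : ∃ j, k = 12 + (j + 1) := ⟨k - 13, by omega⟩
    have := even_of_sq_eq hl (12 + (j + 1) + 12) c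
      (a * b * (l * (l ^ j * (l ^ (12 + (j + 1)) * a ^ 2 - 22 * a * b)) + u ^ 3 * b ^ 2)) (fun h => by
        rcases hl.dvd_or_dvd h with h | h
        · exact hlab h
        · rw [dvd_add_right (Dvd.intro _ rfl)] at h
          rcases hl.dvd_or_dvd h with h | h
          · exact hl.not_isUnit (isUnit_of_dvd_unit h (u.isUnit.pow 3))
          · exact hlb (hl.dvd_of_dvd_pow h)) (by rw [hc, h125]; ring)
    rw [Nat.even_iff] at this ⊢
    omega

variable (p : R) (hp : p ^ 2 = p + 1)
  (hU : ∀ u : Rˣ, ∃ v : Rˣ,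
    (u : R) = v ^ 2 ∨ (u : R) = - v ^ 2 ∨ (u : R) = p * v ^ 2 ∨ (u : R) = - p * v ^ 2)

include hU in
theorem fact2R (a b c : R) (hab : IsCoprime a b)
    (hc : c ^ 2 = a * b * (a ^ 2 + 11 * a * b - b ^ 2)) :
    ∃ m : R, a * b = m ^ 2 ∨ a * b = - m ^ 2 ∨ a * b = p * m ^ 2 ∨ a * b = - p * m ^ 2 := by
  have h1 : IsCoprime a (a ^ 2 + 11 * a * b - b ^ 2) := by
    have : IsCoprime a (-b ^ 2 + a * (a + 11 * b)) :=
      IsCoprime.add_mul_left_right hab.pow_right.neg_right _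
    convert this using 1; ring
  have h2 : IsCoprime b (a ^ 2 + 11 * a * b - b ^ 2) := by
    have : IsCoprime b (a ^ 2 + b * (11 * a - b)) :=
      IsCoprime.add_mul_left_right hab.symm.pow_right _
    convert this using 1; ring
  obtain ⟨s, ⟨u, hu⟩⟩ := exists_associated_pow_of_mul_eq_pow' (k := 2) (c := c)
    (IsCoprime.mul_left h1 h2) hc.symm
  obtain ⟨v, hv⟩ := hU u
  refine ⟨s * v, ?_⟩
  rw [← hu]
  rcases hv with hv | hv | hv | hv <;> rw [hv]
  · left; ring
  · right; left; ring
  · right; right; left; ring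
  · right; right; right; ring

include hp hU in
theorem fact1R (h2 : Prime (2 : R)) {l : R} (hl : Prime l) (h5 : Associated (l ^ 4) (5 : R))
    (hF : ∀ a : R, l ∣ a ^ 5 - a) (a b c : R) (ha : a ≠ 0) (hb : b ≠ 0) (hab : IsCoprime a b)
    (hc : c ^ 2 = a * b * (a ^ 2 - 22 * a * b + 125 * b ^ 2)) :
    ∃ m : R, a * b = m ^ 2 := by
  have hb2 : IsCoprime b (a ^ 2 - 22 * a * b + 125 * b ^ 2) := by
    have : IsCoprime b (a ^ 2 + b * (-22 * a + 125 * b)) :=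
      IsCoprime.add_mul_left_right hab.symm.pow_right _
    convert this using 1; ring
  obtain ⟨s, ⟨u, hu⟩⟩ := exists_associated_pow_of_mul_eq_pow' (k := 2) (c := c)
    (IsCoprime.mul_right hab.symm hb2) (by rw [hc]; ring)
  obtain ⟨k, a', hla, haa⟩ := WfDvdMonoid.max_power_factor ha hl.irreducible
  obtain ⟨w, hw⟩ : ∃ (w : Rˣ), ∃ (t : R), a = w * t ^ 2 := by
    have hla' : IsCoprime a' l := (hl.irreducible.coprime_iff_not_dvd.mpr hla).symm
    have ha'b : IsCoprime a' b := by
      rw [haa] at hab; exact hab.of_mul_left_right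
    have ha5 : IsCoprime a' 5 := by
      obtain ⟨u, hu⟩ := h5
      rw [← hu]
      exact (isCoprime_mul_unit_right_right u.isUnit _ _).mpr hla'.pow_right
    have ha'q : IsCoprime a' (a ^ 2 - 22 * a * b + 125 * b ^ 2) := by
      have : IsCoprime a' (5 ^ 3 * b ^ 2 + a' * (l ^ k * (a - 22 * b))) :=
        IsCoprime.add_mul_left_right (ha5.pow_right.mul_right ha'b.pow_right) _
      convert this using 1
      linear_combination (a - 22 * b) * haa
    obtain ⟨t, ⟨w, hw⟩⟩ := exists_associated_pow_of_mul_eq_pow' (k := 2) (c := c)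
      (IsCoprime.mul_right (hla'.pow_right (n := k)) (IsCoprime.mul_right ha'b ha'q))
      (by rw [hc]; linear_combination -b * (a ^ 2 - 22 * a * b + 125 * b ^ 2) * haa)
    have hk : Even k := by
      rcases Nat.eq_zero_or_pos k with rfl | hk0
      · exact Even.zero
      have hlb : ¬ l ∣ b := by
        intro h
        have hd : l ∣ a := by rw [haa]; exact (dvd_pow_self l hk0.ne').mul_right _
        exact hl.not_isUnit (hab.isUnit_of_dvd' hd h)
      rw [haa] at hc
      exact even_at_five hl h5 hF a' b c k hla hlb hc
    obtain ⟨j, rfl⟩ := hk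
    exact ⟨w, l ^ j * t, by rw [haa, ← hw]; ring⟩
  obtain ⟨t, ht⟩ := hw
  obtain ⟨v, hv⟩ := hU (u * w)
  push_cast at hv
  have hu1 : (u : R) * (u⁻¹ : Rˣ) = 1 := by simp
  -- a * u = ε M ^ 2, b * u = e ^ 2
  have main : ∀ ε ε' : R, (u : R) * w = ε * v ^ 2 → ε * ε' = 1 →
      ∃ M e n : R, ¬ (2 ∣ M ∧ 2 ∣ e) ∧ ε * n ^ 2 = (ε * M ^ 2 - 11 * e ^ 2) ^ 2 + 4 * e ^ 4 := by
    intro ε ε' he hee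
    have hM : a * u = ε * (v * t) ^ 2 := by rw [ht]; linear_combination t ^ 2 * he
    have hE : b * u = (s * u) ^ 2 := by rw [← hu]; ring
    generalize (v : R) * t = M at hM
    generalize s * (u : R) = e at hE
    have hu0 : (u : R) ≠ 0 := u.ne_zero
    have hM0 : M ≠ 0 := by
      rintro rfl
      exact mul_ne_zero ha hu0 (by rw [hM]; ring)
    have he0 : e ≠ 0 := by
      rintro rfl
      exact mul_ne_zero hb hu0 (by rw [hE]; ring)
    have hc2 : (c * u ^ 2) ^ 2
        = (M * e) ^ 2 * (ε * ((ε * M ^ 2 - 11 * e ^ 2) ^ 2 + 4 * e ^ 4)) := by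
      have : (c * u ^ 2) ^ 2 = (a * u) * (b * u) *
        ((a * u) ^ 2 - 22 * (a * u) * (b * u) + 125 * (b * u) ^ 2) := by
        linear_combination (u : R) ^ 4 * hc
      rw [this, hM, hE]; ring
    obtain ⟨n, hn⟩ : M * e ∣ c * u ^ 2 := by
      rw [← IsIntegrallyClosed.pow_dvd_pow_iff (n := 2) two_ne_zero]
      exact ⟨_, hc2⟩
    have hn2 : n ^ 2 = ε * ((ε * M ^ 2 - 11 * e ^ 2) ^ 2 + 4 * e ^ 4) := by
      apply mul_left_cancel₀ (pow_ne_zero 2 (mul_ne_zero hM0 he0))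
      rw [← hc2, hn]; ring
    refine ⟨M, e, ε' * n, ?_, ?_⟩
    · rintro ⟨hd1, hd2⟩
      have hd3 : 2 ∣ a := by
        have : 2 ∣ a * u := by rw [hM]; exact (dvd_pow hd1 two_ne_zero).mul_left _
        exact (Units.dvd_mul_right).mp this
      have hd4 : 2 ∣ b := by
        have : 2 ∣ b * u := by rw [hE]; exact dvd_pow hd2 two_ne_zero
        exact (Units.dvd_mul_right).mp this
      exact h2.not_isUnit (hab.isUnit_of_dvd' hd3 hd4)
    · rw [mul_pow, hn2]
      linear_combination (ε * ε' + 1) * ((ε * M ^ 2 - 11 * e ^ 2) ^ 2 + 4 * e ^ 4) * hee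
  have hnu : ∀ z z' : R, z * z' = 1 → ¬ 2 ∣ z := fun z z' hz h =>
    h2.not_isUnit (isUnit_of_dvd_unit h (IsUnit.of_mul_eq_one _ hz))
  rcases hv with hv | hv | hv | hv
  · refine ⟨s * t * v, ?_⟩
    rw [ht, ← hu]
    linear_combination s ^ 2 * t ^ 2 * hv
  · exfalso
    obtain ⟨M, e, n, h1, h3⟩ := main (-1) (-1) (by rw [hv]; ring) (by norm_num)
    exact loc2_gen h2 (-1) 1 1 1 (by norm_num) (by norm_num) (hnu 1 1 (by norm_num))
      (fun h => hnu 1 1 (by norm_num) (by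
        have := dvd_sub h (dvd_refl 2); norm_num at this; exact this)) M e n h1 h3
  · exfalso
    obtain ⟨M, e, n, h1, h3⟩ := main p (p - 1) (by rw [hv]) (by linear_combination hp)
    refine loc2_gen h2 p (p ^ 2) (2 - p) (p ^ 2) ?_ ?_ ?_ ?_ M e n h1 h3
    · linear_combination -(p - 1) * hp
    · linear_combination -(p ^ 2 + p) * hp
    · exact hnu _ (2 - p) (by linear_combination -(p - 1) * hp)
    · intro h
      have hg : p ^ 2 * (2 - p) ^ 2 = 2 - p := by linear_combination -(p - 1) * (2 - p) * hp
      rw [hg] at h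
      obtain ⟨z, hz⟩ := h
      exact hnu p (p - 1) (by linear_combination hp)
        ⟨z - 8 + 5 * p, by linear_combination hz - (5 - p) * hp⟩
  · exfalso
    obtain ⟨M, e, n, h1, h3⟩ := main (-p) (1 - p) (by rw [hv]) (by linear_combination hp)
    refine loc2_gen h2 (-p) (p ^ 2) (2 - p) (p ^ 3) ?_ ?_ ?_ ?_ M e n h1 h3
    · linear_combination -(p - 1) * hp
    · linear_combination -(p ^ 2 - p) * hp
    · exact hnu _ (2 * p - 3) (by linear_combination (2 * p ^ 2 - p + 1) * hp)
    · intro h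
      have hg : p ^ 3 * (2 - p) ^ 2 = p - 1 := by
        linear_combination (-p * (2 - p) * (p - 1) - 1) * hp
      rw [hg] at h
      obtain ⟨z, hz⟩ := h
      exact hnu (p - 1) p (by linear_combination hp)
        ⟨z - (p - 1), by linear_combination hz - (p - 2) * hp⟩
end abstractR

section field
set_option linter.unusedSectionVars false
variable {L : Type*} [Field L] [CharZero L] 

theorem step0 (F1 : ∀ x y : L, x ≠ 0 → y ^ 2 = x * (x ^ 2 - 22 * x + 125) → ∃ s, x = s ^ 2)
    (x y : L) (hx : x ≠ 0) (h : y ^ 2 = x * (x ^ 2 - 22 * x + 125)) :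
    ∃ s r : L, s ^ 2 = x ∧ r ≠ 0 ∧ (s ^ 2 - 11) * r = r ^ 2 - 1 := by
  obtain ⟨s, rfl⟩ := F1 x y hx h
  have hs : s ≠ 0 := by rintro rfl; simp at hx
  obtain ⟨w, rfl⟩ : ∃ w, y = s * w := ⟨y / s, by field_simp⟩
  have hw : w ^ 2 = s ^ 4 - 22 * s ^ 2 + 125 := by
    apply mul_left_cancel₀ (pow_ne_zero 2 hs)
    linear_combination h
  have hr : (w + s ^ 2 - 11) / 2 * ((w - s ^ 2 + 11) / 2) = 1 := by
    linear_combination hw / 4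
  refine ⟨s, (w + s ^ 2 - 11) / 2, rfl, left_ne_zero_of_mul_eq_one hr, ?_⟩
  linear_combination -hr

theorem step1 (p : L) (hp : p ^ 2 = p + 1)
    (F1 : ∀ x y : L, x ≠ 0 → y ^ 2 = x * (x ^ 2 - 22 * x + 125) → ∃ s, x = s ^ 2)
    (F2 : ∀ r z : L, r ≠ 0 → z ^ 2 = r * (r ^ 2 + 11 * r - 1) →
      ∃ t, r = t ^ 2 ∨ r = - t ^ 2 ∨ r = p * t ^ 2 ∨ r = - p * t ^ 2)
    (x y : L) (hx : x ≠ 0) (h : y ^ 2 = x * (x ^ 2 - 22 * x + 125)) :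
    ∃ s t : L, t ≠ 0 ∧ (s ^ 2 = x ∨ s ^ 2 * x = 125) ∧ (s ^ 2 - 11) * t ^ 2 = t ^ 4 - 1 := by
  obtain ⟨s, r, rfl, hr0, hr⟩ := step0 F1 x y hx h
  have hs : s ≠ 0 := by rintro rfl; simp at hx
  have hp0 : p ≠ 0 := by rintro rfl; norm_num at hp
  have core : ∀ r : L, r ≠ 0 → (s ^ 2 - 11) * r = r ^ 2 - 1 → (∃ t, r = t ^ 2 ∨ r = p * t ^ 2) →
      ∃ s' t : L, t ≠ 0 ∧ (s' ^ 2 = s ^ 2 ∨ s' ^ 2 * s ^ 2 = 125) ∧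
        (s' ^ 2 - 11) * t ^ 2 = t ^ 4 - 1 := by
    rintro r hr0 hr ⟨t, ht | ht⟩
    · refine ⟨s, t, by rintro rfl; simp [ht] at hr0, Or.inl rfl, ?_⟩
      rw [ht] at hr; linear_combination hr
    · have ht0 : t ≠ 0 := by rintro rfl; simp [ht] at hr0
      have hfac : (r - (5 * p - 8)) * (r + (5 * p + 3)) = s ^ 2 * r := by
        linear_combination -hr - 25 * hp
      have hne : r - (5 * p - 8) ≠ 0 := by
        intro h0; rw [h0, zero_mul] at hfac
        exact mul_ne_zero (pow_ne_zero 2 hs) hr0 hfac.symm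
      obtain ⟨D, hD⟩ : ∃ D, D = r - (5 * p - 8) := ⟨_, rfl⟩
      rw [← hD] at hfac hne
      have hp1 : p - 1 ≠ 0 := by
        intro h0
        have : p = 1 := by linear_combination h0
        rw [this] at hp; norm_num at hp
      -- t'^2 = (5p-8)(r+5p+3)/D
      have ht2 : ((p - 1) ^ 2 * t * s / D) ^ 2 = (5 * p - 8) * (r + (5 * p + 3)) / D := by
        rw [div_pow, div_eq_div_iff (pow_ne_zero 2 hne) hne]
        have : ((p - 1) ^ 2 * t * s) ^ 2 = (5 * p - 8) * (s ^ 2 * r) := by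
          rw [ht]
          have e1 : (p - 1) ^ 4 = (5 * p - 8) * p := by
            linear_combination (p ^ 2 - 3 * p - 1) * hp
          linear_combination t ^ 2 * s ^ 2 * e1
        rw [this, ← hfac]; ring
      refine ⟨5 * (2 * p - 1) / s, (p - 1) ^ 2 * t * s / D, ?_, Or.inr ?_, ?_⟩
      · exact div_ne_zero (mul_ne_zero (mul_ne_zero (pow_ne_zero 2 hp1) ht0) hs) hne
      · field_simp
        linear_combination 100 * hp
      · rw [show ∀ z : L, z ^ 4 = (z ^ 2) ^ 2 from fun z => by ring, ht2]
        have hs2 : (5 * (2 * p - 1) / s) ^ 2 = 125 * r / (D * (r + (5 * p + 3))) := by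
          have hq : (5 * (2 * p - 1)) ^ 2 = 125 := by linear_combination 100 * hp
          rw [div_pow, hq, hfac]
          field_simp
        have hne2 : r + (5 * p + 3) ≠ 0 := by
          intro h0; rw [h0, mul_zero] at hfac
          exact mul_ne_zero (pow_ne_zero 2 hs) hr0 hfac.symm
        have hid : 125 * r * (5 * p - 8) - 11 * (5 * p - 8) * (r + (5 * p + 3)) * D
            = (5 * p - 8) ^ 2 * (r + (5 * p + 3)) ^ 2 - D ^ 2 := by
          rw [hD]
          linear_combination (-25 * r ^ 2 - 50 * (5 * p - 8) * r + 275 * (5 * p - 8) - 25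
            - 625 * (p ^ 2 - p - 1)) * hp
        rw [hs2]
        field_simp
        linear_combination hid
  have hz : (r * s) ^ 2 = r * (r ^ 2 + 11 * r - 1) := by linear_combination r * hr
  obtain ⟨t, ht⟩ := F2 r _ hr0 hz
  have hinv : -r⁻¹ ≠ 0 := neg_ne_zero.mpr (inv_ne_zero hr0)
  have hinv2 : (s ^ 2 - 11) * (-r⁻¹) = (-r⁻¹) ^ 2 - 1 := by
    field_simp
    linear_combination -hr
  rcases ht with ht | ht | ht | ht
  · exact core r hr0 hr ⟨t, Or.inl ht⟩
  · exact core _ hinv hinv2 ⟨t⁻¹, Or.inl (by rw [ht]; simp [inv_neg])⟩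
  · exact core r hr0 hr ⟨t, Or.inr ht⟩
  · have ht0 : t ≠ 0 := by rintro rfl; simp [ht] at hr0
    exact core _ hinv hinv2 ⟨(p * t)⁻¹, Or.inr (by rw [ht]; field_simp)⟩

variable {Γ : Type*} [LinearOrderedCommGroupWithZero Γ] (v : Valuation L Γ)

theorem aux_sum (a b c : L) (hab : v (a * b) = 1) (hc : v c ≤ 1) (h : v (c * (a + b)) ≤ 1) :
    v (c * a) ≤ 1 := by
  rw [map_mul] at *
  by_cases ha : v a ≤ 1
  · exact mul_le_one' hc ha
  · push Not at ha
    have hb : v b < v a := by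
      by_contra hb
      push Not at hb
      have : 1 < v a * v b := by
        calc (1 : Γ) < v a := ha
          _ ≤ v b := hb
          _ = 1 * v b := (one_mul _).symm
          _ ≤ v a * v b := mul_le_mul_left ha.le _
      exact absurd hab this.ne'
    rwa [Valuation.map_add_eq_of_lt_left v hb] at h

theorem aux_sq (hv2 : v 2 < 1) (hd : ∀ z, v z < 1 → v z ≤ v 2) (z : L) (hz : v z ≤ 1)
    (h : v (z ^ 2 - 1) < 1) : ∃ c, v c ≤ 1 ∧ z = 1 + 2 * c := by
  have h1 : v (z - 1) ≤ 1 := (v.map_sub _ _).trans (max_le hz (by simp))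
  have h2 : v ((z - 1) ^ 2) < 1 := by
    have e : (z - 1) ^ 2 = (z ^ 2 - 1) - 2 * (z - 1) := by ring
    rw [e]
    refine lt_of_le_of_lt (v.map_sub _ _) (max_lt h ?_)
    rw [map_mul]
    exact mul_lt_one_of_lt_of_le hv2 h1
  have h3 : v (z - 1) < 1 := by
    rw [map_pow] at h2
    exact (pow_lt_one_iff two_ne_zero).mp h2
  have h4 := hd _ h3
  have h20 : (0 : Γ) < v 2 := by
    rw [zero_lt_iff, Valuation.ne_zero_iff]; norm_num
  refine ⟨(z - 1) / 2, ?_, by ring⟩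
  rw [map_div₀]
  exact div_le_one_of_le₀ h4 zero_le

theorem descent (p : L) (hp : p ^ 2 = p + 1)
    (F1 : ∀ x y : L, x ≠ 0 → y ^ 2 = x * (x ^ 2 - 22 * x + 125) → ∃ s, x = s ^ 2)
    (F2 : ∀ r z : L, r ≠ 0 → z ^ 2 = r * (r ^ 2 + 11 * r - 1) →
      ∃ t, r = t ^ 2 ∨ r = - t ^ 2 ∨ r = p * t ^ 2 ∨ r = - p * t ^ 2)
    (hv2 : v 2 < 1) (hd : ∀ z, v z < 1 → v z ≤ v 2) (k : ℕ) :
    ∀ x y : L, x ≠ 0 → y ^ 2 = x * (x ^ 2 - 22 * x + 125) → v (4 ^ k * x) ≤ 1 →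
      v (4 ^ k * x⁻¹) ≤ 1 → False := by
  have hadd : ∀ {a b : L}, v a ≤ 1 → v b ≤ 1 → v (a + b) ≤ 1 := fun ha hb => v.map_add_le ha hb
  have hmul : ∀ {a b : L}, v a ≤ 1 → v b ≤ 1 → v (a * b) ≤ 1 := fun ha hb => by
    rw [map_mul]; exact mul_le_one' ha hb
  have hneg : ∀ {a : L}, v a ≤ 1 → v (-a) ≤ 1 := fun ha => by rwa [Valuation.map_neg]
  have hnat : ∀ n : ℕ, v (n : L) ≤ 1 := fun n => by
    induction n with
    | zero => simp
    | succ n ih => push_cast; exact hadd ih (by simp)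
  have hodd : ∀ n : ℕ, v ((2 * n + 1 : ℕ) : L) = 1 := fun n => by
    push_cast
    rw [add_comm, Valuation.map_add_eq_of_lt_left, map_one]
    rw [map_mul, map_one]
    exact mul_lt_one_of_lt_of_le hv2 (hnat n)
  have h5 : v (5 : L) = 1 := by simpa using hodd 2
  have h125 : v (125 : L) = 1 := by
    have := hodd 62; norm_num at this; exact this
  have h11 : v (11 : L) ≤ 1 := by simpa using hnat 11
  have h22 : v (22 : L) ≤ 1 := by simpa using hnat 22
  have h4 : v (4 : L) ≤ 1 := by simpa using hnat 4
  have h4k : ∀ k : ℕ, v ((4 : L) ^ k) ≤ 1 := fun k => by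
    rw [map_pow]; exact pow_le_one' h4 k
  -- consequences of one step
  have stp : ∀ (k : ℕ) (x y : L), x ≠ 0 → y ^ 2 = x * (x ^ 2 - 22 * x + 125) →
      v (4 ^ k * x) ≤ 1 → v (4 ^ k * x⁻¹) ≤ 1 → ∃ s t : L, t ≠ 0 ∧ 
        (s ^ 2 - 11) * t ^ 2 = t ^ 4 - 1 ∧ v (4 ^ k * s ^ 2) ≤ 1 ∧ v (4 ^ k * t ^ 2) ≤ 1 := by
    intro k x y hx h hk1 hk2
    obtain ⟨s, t, ht, hs, hst⟩ := step1 p hp F1 F2 x y hx h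
    have hks : v (4 ^ k * s ^ 2) ≤ 1 := by
      rcases hs with hs | hs
      · rwa [hs]
      · have : (4 : L) ^ k * s ^ 2 = 125 * (4 ^ k * x⁻¹) := by
          field_simp; linear_combination hs
        rw [this]; exact hmul h125.le hk2
    refine ⟨s, t, ht, hst, hks, ?_⟩
    apply aux_sum v (t ^ 2) (-(t ^ 2)⁻¹) (4 ^ k) _ (h4k k)
    · have : t ^ 2 + -(t ^ 2)⁻¹ = s ^ 2 - 11 := by field_simp; linear_combination -hst
      rw [this, mul_sub, sub_eq_add_neg]
      exact hadd hks (hneg (hmul (h4k k) h11))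
    · have : t ^ 2 * -(t ^ 2)⁻¹ = -1 := by field_simp
      rw [this, Valuation.map_neg, map_one]
  have nxt : ∀ s t : L, t ≠ 0 → (s ^ 2 - 11) * t ^ 2 = t ^ 4 - 1 → ∃ X Y : L, X ≠ 0 ∧
      Y ^ 2 = X * (X ^ 2 - 22 * X + 125) ∧ X = 2 * t ^ 2 + 11 + 2 * s * t ∧
      X + 125 * X⁻¹ = 4 * t ^ 2 + 22 := by
    intro s t ht hst
    have hX : (2 * t ^ 2 + 11 + 2 * s * t) * (2 * t ^ 2 + 11 - 2 * s * t) = 125 := by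
      linear_combination -4 * hst
    have hX0 : 2 * t ^ 2 + 11 + 2 * s * t ≠ 0 := by
      intro h0; rw [h0] at hX; norm_num at hX
    refine ⟨_, 2 * t * (2 * t ^ 2 + 11 + 2 * s * t), hX0, ?_, rfl, ?_⟩
    · linear_combination (2 * t ^ 2 + 11 + 2 * s * t) * hX
    · have e : (125 : L) * (2 * t ^ 2 + 11 + 2 * s * t)⁻¹ = 2 * t ^ 2 + 11 - 2 * s * t :=
        ((eq_mul_inv_iff_mul_eq₀ hX0).mpr (by rw [mul_comm]; exact hX)).symm
      rw [e]; ring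
  induction k with
  | zero =>
    intro x y hx h hk1 hk2
    obtain ⟨s, t, ht, hst, hs1, ht1⟩ := stp 0 x y hx h hk1 hk2
    obtain ⟨X, Y, hX0, hXY, hX, -⟩ := nxt s t ht hst
    have hs : v s ≤ 1 := by
      rw [pow_zero, one_mul, map_pow] at hs1
      exact (pow_le_one_iff two_ne_zero).mp hs1
    have ht' : v t ≤ 1 := by
      rw [pow_zero, one_mul, map_pow] at ht1
      exact (pow_le_one_iff two_ne_zero).mp ht1
    obtain ⟨s1, r, hs1X, hr0, hr⟩ := step0 F1 X Y hX0 hXY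
    have hsm : v (s1 ^ 2 - 1) < 1 := by
      have : s1 ^ 2 - 1 = 2 * (t * t + 5 + s * t) := by rw [hs1X, hX]; ring
      rw [this, map_mul]
      exact mul_lt_one_of_lt_of_le hv2 (hadd (hadd (hmul ht' ht') h5.le) (hmul hs ht'))
    have hs1i : v s1 ≤ 1 := by
      have : v (s1 ^ 2) ≤ 1 := by
        have := hadd hsm.le (v.map_one.le); simpa using this
      rw [map_pow] at this
      exact (pow_le_one_iff two_ne_zero).mp this
    obtain ⟨c, hc, rfl⟩ := aux_sq v hv2 hd s1 hs1i hsm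
    have hri : v r ≤ 1 := by
      have := aux_sum v r (-r⁻¹) 1 (by field_simp; simp) (by simp) (by
        have e : r + -r⁻¹ = (1 + 2 * c) ^ 2 - 11 := by field_simp; linear_combination -hr
        rw [e, one_mul, sub_eq_add_neg]
        exact hadd (by rw [map_pow]; exact pow_le_one' hs1i 2) (hneg h11))
      simpa using this
    have hrm : v (r ^ 2 - 1) < 1 := by
      have : r ^ 2 - 1 = 2 * ((2 * (c + c * c) + -5) * r) := by linear_combination -hr
      rw [this, map_mul]
      exact mul_lt_one_of_lt_of_le hv2
        (hmul (hadd (hmul hv2.le (hadd hc (hmul hc hc))) (hneg h5.le)) hri)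
    obtain ⟨d, hdd, rfl⟩ := aux_sq v hv2 hd r hri hrm
    have hfin : (5 : L) = 2 * ((c + c * c) * (1 + 2 * d) + -(5 * d) + -(d + d * d)) := by
      linear_combination - hr / 2
    have : v (5 : L) < 1 := by
      rw [hfin, map_mul]
      refine mul_lt_one_of_lt_of_le hv2 (hadd (hadd (hmul (hadd hc (hmul hc hc)) hri) 
        (hneg (hmul h5.le hdd))) (hneg (hadd hdd (hmul hdd hdd))))
    exact absurd h5 this.ne
  | succ k ih =>
    intro x y hx h hk1 hk2
    obtain ⟨s, t, ht, hst, hs1, ht1⟩ := stp (k + 1) x y hx h hk1 hk2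
    obtain ⟨X, Y, hX0, hXY, hX, hsum⟩ := nxt s t ht hst
    have hT : v (4 ^ k * (X + 125 * X⁻¹)) ≤ 1 := by
      rw [hsum]
      have : (4 : L) ^ k * (4 * t ^ 2 + 22) = 4 ^ (k + 1) * t ^ 2 + 4 ^ k * 22 := by ring
      rw [this]
      exact hadd ht1 (hmul (h4k k) h22)
    have hprod : v (X * (125 * X⁻¹)) = 1 := by
      rw [← h125]; congr 1; field_simp
    refine ih X Y hX0 hXY (aux_sum v _ _ _ hprod (h4k k) hT) ?_
    have := aux_sum v (125 * X⁻¹) X (4 ^ k) (by rw [mul_comm]; exact hprod) (h4k k)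
      (by rw [add_comm]; exact hT)
    rw [show (4 : L) ^ k * (125 * X⁻¹) = 125 * (4 ^ k * X⁻¹) by ring, map_mul, h125, one_mul] at this
    exact this
end field

open NumberField IsCyclotomicExtension
section
variable (K : Type*) [Field K] [NumberField K] [IsCyclotomicExtension {5} ℚ K]

theorem finrankKK : Module.finrank ℚ K = 4 := by
  rw [IsCyclotomicExtension.Rat.finrank 5]; rfl

theorem prime_two : Prime (2 : 𝓞 K) := by
  have : Fact (Nat.Prime 2) := ⟨Nat.prime_two⟩
  have h0 : (Ideal.span {((2:ℕ) : ℤ)} : Ideal ℤ).IsPrime :=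
    (Ideal.span_singleton_prime (by norm_num)).mpr (by norm_num)
  obtain ⟨⟨P, hP, hP2⟩⟩ := (Ideal.span {((2:ℕ) : ℤ)}).nonempty_primesOver (S := 𝓞 K)
  have h1 := IsCyclotomicExtension.Rat.inertiaDeg_eq_of_not_dvd (m := 5) 2 K P (by norm_num)
  have h2 : orderOf ((2 : ℕ) : ZMod 5) = 4 := by
    have : orderOf ((2 : ℕ) : ZMod 5) = 2 ^ (1 + 1) :=
      orderOf_eq_prime_pow (by decide) (by decide)
    simpa using this
  rw [h2] at h1
  have hP2' : P.LiesOver (Ideal.span {(2:ℤ)}) := hP2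
  have h4 : Ideal.absNorm P = 16 := by
    rw [← Ideal.pow_inertiaDeg 2 P, h1]; norm_num
  have h5 : Ideal.absNorm (Ideal.span {(2 : 𝓞 K)}) = 16 := by
    have : (2 : 𝓞 K) = algebraMap ℤ (𝓞 K) 2 := by simp
    rw [Ideal.absNorm_span_singleton, this, Algebra.norm_algebraMap, RingOfIntegers.rank, finrankKK K]
    rfl
  have h6 : (2 : 𝓞 K) ∈ P := by
    have := (Ideal.mem_of_liesOver P (Ideal.span {(2:ℤ)}) 2).mp (Ideal.mem_span_singleton_self _)
    simpa using this
  obtain ⟨Q, hQ⟩ := Ideal.dvd_iff_le.mpr ((Ideal.span_singleton_le_iff_mem P).mpr h6)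
  have h7 : Ideal.absNorm Q = 1 := by
    have := congrArg Ideal.absNorm hQ
    rw [map_mul, h4, h5] at this
    omega
  rw [Ideal.absNorm_eq_one_iff] at h7
  rw [h7, Ideal.mul_top] at hQ
  rw [← Ideal.span_singleton_prime (by norm_num), hQ]
  exact hP

theorem card_five (a : 𝓞 K) {ζ : K} (hζ : IsPrimitiveRoot ζ 5) :
   hζ.toInteger - 1 ∣ a^5 - a := by
  have : Fact (Nat.Prime 5) := ⟨by norm_num⟩
  have h1 : Nat.card (𝓞 K ⧸ Ideal.span {hζ.toInteger - 1}) = 5 := by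
    rw [hζ.card_quotient_toInteger_sub_one, hζ.norm_toInteger_sub_one_of_prime_ne_two' (by norm_num)]
    rfl
  have hp := hζ.zeta_sub_one_prime'
  have : (Ideal.span {hζ.toInteger - 1}).IsPrime := (Ideal.span_singleton_prime hp.ne_zero).mpr hp
  have : Finite (𝓞 K ⧸ Ideal.span {hζ.toInteger - 1}) := Nat.finite_of_card_ne_zero (by omega)
  have := Fintype.ofFinite (𝓞 K ⧸ Ideal.span {hζ.toInteger - 1})
  let F : Field (𝓞 K ⧸ Ideal.span {hζ.toInteger - 1}) := (Finite.isField_of_domain _).toField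
  have h2 := FiniteField.pow_card (Ideal.Quotient.mk (Ideal.span {hζ.toInteger - 1}) a)
  rw [← Nat.card_eq_fintype_card, h1] at h2
  rw [← Ideal.mem_span_singleton, ← Ideal.Quotient.eq, map_pow]
  exact h2

theorem rank_one : Units.rank K = 1 := by
  rw [Units.rank, InfinitePlace.card_eq_nrRealPlaces_add_nrComplexPlaces, IsCyclotomicExtension.Rat.nrRealPlaces_eq_zero (n := 5) K (by norm_num), IsCyclotomicExtension.Rat.nrComplexPlaces_eq_totient_div_two 5]
  rfl

theorem units_gen : ∃ g η : (𝓞 K)ˣ, ∀ u : (𝓞 K)ˣ, ∃ i j : ℤ, u = g ^ i * η ^ j := by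
  obtain ⟨g, hg⟩ := IsCyclic.exists_generator (α := Units.torsion K)
  refine ⟨g, Units.fundSystem K ⟨0, by rw [rank_one]; norm_num⟩, fun u => ?_⟩
  obtain ⟨⟨z, f⟩, h, -⟩ := Units.exist_unique_eq_mul_prod K u
  obtain ⟨i, hi⟩ := hg z
  refine ⟨i, f ⟨0, by rw [rank_one]; norm_num⟩, ?_⟩
  rw [h, ← hi]
  simp only [Subgroup.coe_zpow]
  congr 1
  have : ∀ k : Fin (Units.rank K), k = ⟨0, by rw [rank_one]; norm_num⟩ := by
    intro ⟨k, hk⟩; rw [rank_one] at hk; ext; simp; omega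
  rw [Finset.prod_eq_single ⟨0, by rw [rank_one]; norm_num⟩]
  · intro b _ hb; exact absurd (this b) hb
  · simp

theorem sq_class (u : (𝓞 K)ˣ) (p : 𝓞 K) (hp : p ^ 2 = p + 1) : ∃ v : (𝓞 K)ˣ,
    (u : 𝓞 K) = v ^ 2 ∨ (u : 𝓞 K) = - v ^ 2 ∨ (u : 𝓞 K) = p * v ^ 2 ∨ (u : 𝓞 K) = - p * v ^ 2 := by
  have h2 := prime_two K
  have half : ∀ a b : 𝓞 K, 2 * a = 2 * b → a = b :=
    fun a b hab => mul_left_cancel₀ h2.ne_zero hab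
  have hpu : IsUnit p := IsUnit.of_mul_eq_one (p - 1) (by linear_combination hp)
  have hu : ∀ z : 𝓞 K, IsUnit z → ¬ 2 ∣ z := fun z hz h => h2.not_isUnit (isUnit_of_dvd_unit h hz)
  -- three nonsquares
  have n1 : ∀ v : 𝓞 K, v ^ 2 ≠ -1 := by
    intro v hv
    obtain ⟨c, hc⟩ := h2.dvd_of_dvd_pow (n := 2) (a := v - 1) ⟨-v, by linear_combination hv⟩
    obtain rfl : v = 1 + 2 * c := by linear_combination hc
    exact hu 1 isUnit_one ⟨-(c + c ^ 2), half _ _ (by linear_combination hv) ⟩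
  have n2 : ∀ v : 𝓞 K, v ^ 2 ≠ p := by
    intro v hv
    obtain ⟨c, hc⟩ := h2.dvd_of_dvd_pow (n := 2) (a := v - p ^ 2)
      ⟨p + p ^ 2 - p ^ 2 * v, by linear_combination hv + (p ^ 2 + p) * hp⟩
    obtain rfl : v = p ^ 2 + 2 * c := by linear_combination hc
    exact hu (p ^ 2) (hpu.pow 2) ⟨-(p ^ 2 * c + c ^ 2), half _ _ (by linear_combination hv - (p ^ 2 + p) * hp) ⟩
  have n3 : ∀ v : 𝓞 K, v ^ 2 ≠ - p := by
    intro v hv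
    obtain ⟨c, hc⟩ := h2.dvd_of_dvd_pow (n := 2) (a := v - p ^ 2)
      ⟨p ^ 2 - p ^ 2 * v, by linear_combination hv + (p ^ 2 + p) * hp⟩
    obtain rfl : v = p ^ 2 + 2 * c := by linear_combination hc
    exact hu (p ^ 3) (hpu.pow 3) ⟨- (p ^ 2 * c + c ^ 2), half _ _ (by linear_combination hv - (p ^ 2 + p) * hp + 2 * p * hp) ⟩
  obtain ⟨g, η, hgen⟩ := units_gen K
  have hcl : ∀ u : (𝓞 K)ˣ, ∃ c : Bool × Bool, ∃ w : (𝓞 K)ˣ,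
      u = (if c.1 then g else 1) * (if c.2 then η else 1) * w ^ 2 := by
    intro u
    obtain ⟨i, j, rfl⟩ := hgen u
    rcases Int.even_or_odd' i with ⟨k, rfl | rfl⟩ <;> rcases Int.even_or_odd' j with ⟨l, rfl | rfl⟩
    · exact ⟨(false, false), g ^ k * η ^ l, by
        simp [two_mul, zpow_add, sq]; ac_rfl⟩
    · exact ⟨(false, true), g ^ k * η ^ l, by
        simp [two_mul, zpow_add, sq]; ac_rfl⟩
    · exact ⟨(true, false), g ^ k * η ^ l, by
        simp [two_mul, zpow_add, sq]; ac_rfl⟩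
    · exact ⟨(true, true), g ^ k * η ^ l, by
        simp [two_mul, zpow_add, sq]; ac_rfl⟩
  choose C hC using hcl
  have key : ∀ u u' : (𝓞 K)ˣ, C u = C u' → ∃ w : (𝓞 K)ˣ, u = u' * w ^ 2 := by
    intro u u' h
    obtain ⟨w, hw⟩ := hC u
    obtain ⟨w', hw'⟩ := hC u'
    rw [← h] at hw'
    refine ⟨w * w'⁻¹, ?_⟩
    generalize (if (C u).1 then g else 1) * (if (C u).2 then η else 1) = t at hw hw'
    rw [hw, hw', mul_pow, inv_pow]
    rw [mul_comm (w ^ 2), mul_assoc, mul_inv_cancel_left]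
  obtain ⟨P, hP⟩ := hpu
  let E : Bool × Bool → (𝓞 K)ˣ := fun c => (if c.1 then -1 else 1) * (if c.2 then P else 1)
  have hinj : Function.Injective (C ∘ E) := by
    intro c c' h
    obtain ⟨w, hw⟩ := key _ _ h
    have hw2 : ((E c : (𝓞 K)ˣ) : 𝓞 K) = E c' * w ^ 2 := by rw [hw]; simp
    have hwi : ((w⁻¹ : (𝓞 K)ˣ) : 𝓞 K) * w = 1 := by simp
    generalize ((w⁻¹ : (𝓞 K)ˣ) : 𝓞 K) = w1 at hwi
    generalize (w : 𝓞 K) = w2 at hw2 hwi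
    rcases c with ⟨_ | _, _ | _⟩ <;> rcases c' with ⟨_ | _, _ | _⟩ <;> simp [E, hP] at hw2 ⊢
    all_goals first
      | exact n1 w2 (by linear_combination hw2)
      | exact n1 w2 (by linear_combination -hw2)
      | exact n2 w2 (by linear_combination hw2)
      | exact n2 w2 (by linear_combination -hw2)
      | exact n3 w2 (by linear_combination hw2)
      | exact n3 w2 (by linear_combination -hw2)
      | exact n2 w1 (by linear_combination w1 ^ 2 * hw2 + p * (w1 * w2 + 1) * hwi)
      | exact n2 w1 (by linear_combination -w1 ^ 2 * hw2 + p * (w1 * w2 + 1) * hwi)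
      | exact n3 w1 (by linear_combination w1 ^ 2 * hw2 - p * (w1 * w2 + 1) * hwi)
      | exact n3 w1 (by linear_combination -w1 ^ 2 * hw2 - p * (w1 * w2 + 1) * hwi)
      | exact n1 w2 (by linear_combination (p - 1) * hw2 - (w2 ^ 2 + 1) * hp)
      | exact n1 w2 (by linear_combination -(p - 1) * hw2 - (w2 ^ 2 + 1) * hp)
  obtain ⟨c, hc⟩ := Finite.injective_iff_surjective.mp hinj (C u)
  obtain ⟨w, hw⟩ := key _ _ hc.symm
  refine ⟨w, ?_⟩
  have hw2 : (u : 𝓞 K) = E c * w ^ 2 := by rw [hw]; simp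
  rw [hw2]
  rcases c with ⟨_ | _, _ | _⟩ <;> simp [E, hP]
end

section transfer
variable {R K : Type*} [CommRing R] [IsDomain R] [IsPrincipalIdealRing R] [Field K] [Algebra R K]
  [IsFractionRing R K]

theorem reduce_frac (x y : K) (P : R → R → R)
    (hP : ∀ a b : R, algebraMap R K b ≠ 0 →
      x = algebraMap R K a / algebraMap R K b →
      (y * algebraMap R K b ^ 2) ^ 2 = algebraMap R K (P a b)) :
    ∃ a b c : R, IsCoprime a b ∧ algebraMap R K b ≠ 0 ∧
      x = algebraMap R K a / algebraMap R K b ∧ c ^ 2 = P a b := by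
  obtain ⟨a, b, hab, hx⟩ := IsFractionRing.exists_reduced_fraction R x
  rw [IsFractionRing.mk'_eq_div] at hx
  have hb : algebraMap R K (b : R) ≠ 0 := by
    rw [Ne, FaithfulSMul.algebraMap_eq_zero_iff]
    exact nonZeroDivisors.ne_zero b.2
  have h := hP a b hb hx.symm
  obtain ⟨c, hc⟩ := IsIntegrallyClosed.exists_algebraMap_eq_of_isIntegral_pow (R := R)
    (x := y * algebraMap R K b ^ 2) (n := 2) two_pos (by rw [h]; exact isIntegral_algebraMap)
  refine ⟨a, b, c, hab.isCoprime, hb, hx.symm, ?_⟩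
  apply FaithfulSMul.algebraMap_injective R K
  rw [map_pow, hc, h]
end transfer

section final
variable (K : Type*) [Field K] [NumberField K] [IsCyclotomicExtension {5} ℚ K]

theorem facts : ∃ p : K, p ^ 2 = p + 1 ∧
    (∀ x y : K, x ≠ 0 → y ^ 2 = x * (x ^ 2 - 22 * x + 125) → ∃ s, x = s ^ 2) ∧
    (∀ r z : K, r ≠ 0 → z ^ 2 = r * (r ^ 2 + 11 * r - 1) →
      ∃ t, r = t ^ 2 ∨ r = - t ^ 2 ∨ r = p * t ^ 2 ∨ r = - p * t ^ 2) := by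
  have : Fact (Nat.Prime 5) := ⟨by norm_num⟩
  have hpid : IsPrincipalIdealRing (𝓞 K) := IsCyclotomicExtension.Rat.five_pid K
  have hζ := IsCyclotomicExtension.zeta_spec 5 ℚ K
  have hz : 1 + hζ.toInteger + hζ.toInteger ^ 2 + hζ.toInteger ^ 3 + hζ.toInteger ^ 4 = 0 := by
    have := hζ.toInteger_isPrimitiveRoot.geom_sum_eq_zero (by norm_num)
    simpa [Finset.sum_range_succ] using this
  have hl := hζ.zeta_sub_one_prime'
  have h5 : Associated ((hζ.toInteger - 1) ^ 4) (5 : 𝓞 K) :=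
    IsCyclotomicExtension.Rat.associated_zeta_sub_one_pow_prime 5 hζ
  have hF := fun a => card_five K a hζ
  generalize hζ.toInteger = z at *
  obtain ⟨p, hpz⟩ : ∃ p : 𝓞 K, p = -(z ^ 2 + z ^ 3) := ⟨_, rfl⟩
  have hp : p ^ 2 = p + 1 := by
    rw [hpz]; linear_combination (z ^ 2 + z - 1) * hz
  have hU := fun u => sq_class K u p hp
  refine ⟨algebraMap (𝓞 K) K p, by rw [← map_pow, hp]; simp, ?_, ?_⟩
  · intro x y hx h
    obtain ⟨a, b, c, hab, hb, rfl, hc⟩ := reduce_frac (R := 𝓞 K) x y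
      (fun a b => a * b * (a ^ 2 - 22 * a * b + 125 * b ^ 2)) (by
        rintro a b hb rfl
        rw [mul_pow, h]
        simp only [map_mul, map_add, map_sub, map_pow, map_ofNat]
        field_simp)
    have ha0 : a ≠ 0 := by rintro rfl; simp at hx
    have hb0 : b ≠ 0 := by rintro rfl; simp at hb
    obtain ⟨m, hm⟩ := fact1R p hp hU (prime_two K) hl h5 hF a b c ha0 hb0 hab hc
    refine ⟨algebraMap _ K m / algebraMap _ K b, ?_⟩
    rw [div_pow, ← map_pow, ← hm, map_mul]
    field_simp
  · intro x y hx h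
    obtain ⟨a, b, c, hab, hb, rfl, hc⟩ := reduce_frac (R := 𝓞 K) x y
      (fun a b => a * b * (a ^ 2 + 11 * a * b - b ^ 2)) (by
        rintro a b hb rfl
        rw [mul_pow, h]
        simp only [map_mul, map_add, map_sub, map_pow, map_ofNat]
        field_simp)
    obtain ⟨m, hm⟩ := fact2R p hU a b c hab hc
    have e : algebraMap (𝓞 K) K a / algebraMap _ K b
        = algebraMap (𝓞 K) K (a * b) / algebraMap _ K b ^ 2 := by
      rw [map_mul]; field_simp
    refine ⟨algebraMap _ K m / algebraMap _ K b, ?_⟩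
    rw [e]
    rcases hm with hm | hm | hm | hm
    · left; rw [hm, map_pow]; ring
    · right; left; rw [hm, map_neg, map_pow]; ring
    · right; right; left; rw [hm, map_mul, map_pow]; ring
    · right; right; right; rw [hm, map_mul, map_neg, map_pow]; ring

theorem exists_val : ∃ v : Valuation K (WithZero (Multiplicative ℤ)),
    v 2 = WithZero.exp (-1 : ℤ) := by
  have h2 := prime_two K
  let P : IsDedekindDomain.HeightOneSpectrum (𝓞 K) :=
    ⟨Ideal.span {2}, (Ideal.span_singleton_prime h2.ne_zero).mpr h2, by
      simp⟩
  refine ⟨P.valuation K, ?_⟩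
  rw [show (2 : K) = algebraMap (𝓞 K) K 2 from (map_ofNat _ 2).symm, P.valuation_of_algebraMap,
    P.intValuation_singleton h2.ne_zero rfl]

theorem no_pts (x y : K) (hx : x ≠ 0) (h : y ^ 2 = x * (x ^ 2 - 22 * x + 125)) : False := by
  obtain ⟨p, hp, F1, F2⟩ := facts K
  obtain ⟨v, hv⟩ := exists_val K
  have hv1 : v 2 < 1 := by rw [hv, ← WithZero.exp_zero, WithZero.exp_lt_exp]; norm_num
  have hd : ∀ z, v z < 1 → v z ≤ v 2 := by
    intro z hz
    rw [hv]
    by_cases h0 : v z = 0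
    · rw [h0]; exact zero_le
    · rw [← WithZero.exp_log h0, ← WithZero.exp_zero, WithZero.exp_lt_exp] at hz
      rw [← WithZero.exp_log h0, WithZero.exp_le_exp]
      omega
  have key : ∀ z : K, z ≠ 0 → ∀ k : ℕ, (WithZero.log (v z)).natAbs ≤ k → v (4 ^ k * z) ≤ 1 := by
    intro z hz k hk
    have h0 : v z ≠ 0 := (Valuation.ne_zero_iff v).mpr hz
    have e : v (4 ^ k * z) = WithZero.exp (-(2 * k : ℤ) + WithZero.log (v z)) := by
      rw [show (4 : K) = 2 ^ 2 by norm_num, ← pow_mul, map_mul, map_pow, hv, WithZero.exp_add,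
        WithZero.exp_log h0, ← WithZero.exp_nsmul]
      simp
    rw [e, ← WithZero.exp_zero, WithZero.exp_le_exp]
    omega
  refine descent v p hp F1 F2 hv1 hd (max (WithZero.log (v x)).natAbs (WithZero.log (v x⁻¹)).natAbs)
    x y hx h (key x hx _ (le_max_left _ _)) (key _ (inv_ne_zero hx) _ (le_max_right _ _))
end final

/-- The determination of `ℚ(ζ₅)`-points used in the proof of Proposition 7.2: the only
pair `(x, y)` in the fifth cyclotomic field `L = ℚ(ζ₅)` with `-5y² = x(x² + 22x + 125)`
is `(0, 0)`. -/
theorem stmt_15 (x y : CyclotomicField 5 ℚ)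
    (h : -5 * y ^ 2 = x * (x ^ 2 + 22 * x + 125)) :
    x = 0 ∧ y = 0 := by
  have : IsCyclotomicExtension {5} ℚ (CyclotomicField 5 ℚ) :=
    CyclotomicField.isCyclotomicExtension 5 ℚ
  have hx : x = 0 := by
    by_contra hx
    obtain ⟨p, hp, -⟩ := facts (CyclotomicField 5 ℚ)
    refine no_pts (CyclotomicField 5 ℚ) (-x) ((2 * p - 1) * y) (neg_ne_zero.mpr hx) ?_
    linear_combination 4 * y ^ 2 * hp - h
  refine ⟨hx, ?_⟩
  subst hx
  simpa using h
end

section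
/- Let K = ℚ(√5). If (x, y) ∈ K × K satisfies −5y² = 2·(x² + x − 1)·(x² + (7/2)x + 27/8), then y = 0 and x² + x − 1 = 0, i.e. x = (−1 + √5)/2 or x = (−1 − √5)/2. -/
open IntermediateField

theorem prodS (n q A B c : ℕ) (hn : n ≠ 0) (hq : q = 1 ∨ IsPrimePow q) (hAB : A.Coprime B)
    (h : A * B = q * c ^ n) :
    ∃ a b, a * b = c ∧ ((A = a ^ n ∧ B = q * b ^ n) ∨ (A = q * a ^ n ∧ B = b ^ n)) := by
  have q0 : 0 < q := by
    rcases hq with rfl | hq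
    · norm_num
    · exact hq.pos
  have key : ∀ A B : ℕ, A.Coprime B → A * B = c ^ n → ∃ a b, a * b = c ∧ A = a ^ n ∧ B = b ^ n := by
    intro A B hAB h
    obtain ⟨a, ha⟩ := exists_eq_pow_of_mul_eq_pow (by rw [Nat.isUnit_iff]; exact hAB) h
    obtain ⟨b, hb⟩ := exists_eq_pow_of_mul_eq_pow (a := B) (b := A) (by rw [Nat.isUnit_iff]; exact hAB.symm) (by rw [mul_comm]; exact h)
    refine ⟨a, b, ?_, ha, hb⟩
    apply Nat.pow_left_injective hn
    simp only [mul_pow, ← ha, ← hb, h]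
  have hd : q ∣ A ∨ q ∣ B := by
    rcases hq with rfl | hq
    · simp
    · exact (Nat.Coprime.isPrimePow_dvd_mul hAB hq).1 (h ▸ Dvd.intro _ rfl)
  rcases hd with ⟨A', rfl⟩ | ⟨B', rfl⟩
  · obtain ⟨a, b, h1, h2, h3⟩ := key A' B hAB.coprime_mul_left
      (Nat.eq_of_mul_eq_mul_left q0 (by rw [← h]; ring))
    exact ⟨a, b, h1, Or.inr ⟨by rw [h2], h3⟩⟩
  · obtain ⟨a, b, h1, h2, h3⟩ := key A B' hAB.coprime_mul_left_right
      (Nat.eq_of_mul_eq_mul_left q0 (by rw [← h]; ring))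
    exact ⟨a, b, h1, Or.inl ⟨h2, by rw [h3]⟩⟩

theorem odd_sq8 (n : ℕ) (h : n % 2 = 1) : ∃ i, n ^ 2 = 8 * i + 1 := by
  have : n ^ 2 % 8 = 1 := by
    have : n % 8 = 1 ∨ n % 8 = 3 ∨ n % 8 = 5 ∨ n % 8 = 7 := by omega
    rcases this with h | h | h | h <;> simp [Nat.pow_mod, h]
  exact ⟨n ^ 2 / 8, by omega⟩

theorem sq_mod16 (n : ℕ) : n ^ 2 % 16 ≠ 8 := by
  have : n % 16 < 16 := Nat.mod_lt _ (by norm_num)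
  rw [Nat.pow_mod]
  interval_cases n % 16 <;> simp

theorem sq_mod4 (n : ℕ) : (n % 2 = 0 ∧ n ^ 2 % 4 = 0) ∨ (n % 2 = 1 ∧ n ^ 2 % 4 = 1) := by
  rcases Nat.mod_two_eq_zero_or_one n with h | h
  · left
    obtain ⟨m, rfl⟩ : ∃ m, n = 2 * m := ⟨n / 2, by omega⟩
    exact ⟨h, by ring_nf; omega⟩
  · right
    obtain ⟨i, hi⟩ := odd_sq8 n h
    omega

theorem factF (M p v : ℕ) (hp : p % 2 = 1) (hc : p.Coprime v)
    (h : M ^ 2 + 4 * p * v + 16 * v ^ 2 = p ^ 2) :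
    ∃ A B : ℕ, A.Coprime B ∧ A * B = 5 * v ^ 2 ∧ A + B + 2 * v = p := by
  have hM : M % 2 = 1 := by
    have h1 := sq_mod4 M
    have h2 := sq_mod4 p
    have h3 : (M ^ 2 + 4 * (p * v + 4 * v ^ 2)) = p ^ 2 := by rw [← h]; ring
    omega
  have h1 : 2 * v ≤ p := by nlinarith
  obtain ⟨w, rfl⟩ := Nat.exists_eq_add_of_le h1
  have h2 : M ^ 2 + 20 * v ^ 2 = w ^ 2 := by nlinarith
  have h3 : M ≤ w := by nlinarith
  obtain ⟨A, rfl⟩ : ∃ A, w = M + 2 * A := ⟨(w - M) / 2, by omega⟩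
  have h4 : A * (A + M) = 5 * v ^ 2 := by nlinarith
  refine ⟨A, A + M, ?_, h4, by ring⟩
  apply Nat.coprime_of_dvd
  intro l hl hA hB
  have hlv : l ∣ v := by
    by_contra hlv
    have hcop : Nat.Coprime (l ^ 2) (v ^ 2) := ((Nat.Prime.coprime_iff_not_dvd hl).2 hlv).pow _ _
    have hd : l ^ 2 ∣ 5 := hcop.dvd_of_dvd_mul_right (by
      rw [← h4, sq]; exact mul_dvd_mul hA hB)
    have h5 : l ∣ 5 := (Dvd.intro_left l (by ring)).trans hd
    rw [Nat.prime_dvd_prime_iff_eq hl (by norm_num)] at h5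
    subst h5
    norm_num at hd
  have hlp : l ∣ 2 * v + (M + 2 * A) := by
    have : 2 * v + (M + 2 * A) = 2 * v + (A + (A + M)) := by ring
    rw [this]
    exact dvd_add (hlv.mul_left _) (dvd_add hA hB)
  exact Nat.not_coprime_of_dvd_of_dvd hl.one_lt hlp hlv hc

theorem no5 (a b X : ℕ) (ha : ¬ 5 ∣ a) (h : 5 * X = a ^ 4 + 2 * a ^ 2 * b ^ 2) : False := by
  have h1 : (a : ZMod 5) ^ 4 + 2 * (a : ZMod 5) ^ 2 * (b : ZMod 5) ^ 2 = 0 := by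
    have := congrArg (Nat.cast : ℕ → ZMod 5) h
    push_cast at this
    rw [← this]
    have : (5 : ZMod 5) = 0 := rfl
    rw [this, zero_mul]
  have h2 : (a : ZMod 5) ≠ 0 := by
    rwa [Ne, ZMod.natCast_eq_zero_iff]
  have key : ∀ a b : ZMod 5, a ≠ 0 → a ^ 4 + 2 * a ^ 2 * b ^ 2 ≠ 0 := by decide
  exact key _ _ h2 h1

/-- the step from `M² = p² - p q - q²` -/
theorem step1_s16 (k : ℕ) (hk : k = 1 ∨ k = 5) (M r t : ℕ) (hc : (r ^ 2).Coprime (k * t ^ 2))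
    (hpar : (r ^ 2) % 2 = 1 ∧ (k * t ^ 2) % 2 = 0)
    (h : M ^ 2 + (r ^ 2) * (k * t ^ 2) + (k * t ^ 2) ^ 2 = (r ^ 2) ^ 2) :
    ∃ a b : ℕ, 2 * (a * b) = t ∧ a.Coprime (k * b) ∧
      r ^ 2 = a ^ 4 + 2 * k * a ^ 2 * b ^ 2 + 5 * k ^ 2 * b ^ 4 := by
  have ht : t % 2 = 0 := by
    have := sq_mod4 t
    rcases hk with rfl | rfl <;> omega
  obtain ⟨u, rfl⟩ : ∃ u, t = 2 * u := ⟨t / 2, by omega⟩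
  obtain ⟨A, B, hAB, h1, h2⟩ := factF M (r ^ 2) (k * u ^ 2) hpar.1
    (hc.coprime_dvd_right ⟨4, by ring⟩) (by rw [← h]; ring)
  have hq : IsPrimePow (5 * k ^ 2) := by
    rcases hk with rfl | rfl
    · exact (show Nat.Prime 5 by norm_num).prime.isPrimePow
    · exact (show Nat.Prime 5 by norm_num).prime.isPrimePow.pow (k := 3) (by norm_num)
  obtain ⟨a, b, hab, hh⟩ := prodS 4 (5 * k ^ 2) A B u (by norm_num) (Or.inr hq) hAB
    (by rw [h1]; ring)
  rcases hh with ⟨rfl, rfl⟩ | ⟨rfl, rfl⟩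
  · refine ⟨a, b, by rw [hab], ?_, ?_⟩
    · exact Nat.Coprime.coprime_dvd_left (Dvd.intro (a ^ 3) (by ring))
        (hAB.coprime_dvd_right ⟨5 * k * b ^ 3, by ring⟩)
    · rw [← h2, ← hab]; ring
  · refine ⟨b, a, by rw [← hab]; ring, ?_, ?_⟩
    · exact Nat.Coprime.coprime_dvd_left (Dvd.intro (b ^ 3) (by ring))
        (hAB.symm.coprime_dvd_right ⟨5 * k * a ^ 3, by ring⟩)
    · rw [← h2, ← hab]; ring

theorem step2 (M r t : ℕ) (hc : (5 * t ^ 2).Coprime (r ^ 2))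
    (hpar : (5 * t ^ 2) % 2 = 1 ∧ (r ^ 2) % 2 = 0)
    (h : M ^ 2 + (5 * t ^ 2) * (r ^ 2) + (r ^ 2) ^ 2 = (5 * t ^ 2) ^ 2) : False := by
  have hr : r % 2 = 0 := by
    have := sq_mod4 r
    omega
  obtain ⟨u, rfl⟩ : ∃ u, r = 2 * u := ⟨r / 2, by omega⟩
  obtain ⟨A, B, hAB, h1, h2⟩ := factF M (5 * t ^ 2) (u ^ 2) hpar.1
    (hc.coprime_dvd_right ⟨4, by ring⟩) (by rw [← h]; ring)
  obtain ⟨a, b, hab, hh⟩ := prodS 4 5 A B u (by norm_num)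
    (Or.inr (show Nat.Prime 5 by norm_num).prime.isPrimePow) hAB
    (by rw [h1]; ring)
  have hu : ¬ 5 ∣ u := by
    intro h5
    exact Nat.not_coprime_of_dvd_of_dvd (d := 5) (by norm_num) (Dvd.intro _ rfl)
      (h5.trans (Dvd.intro (4 * u) (by ring))) hc
  rcases hh with ⟨rfl, rfl⟩ | ⟨rfl, rfl⟩
  · apply no5 a b (t ^ 2 - b ^ 4) (fun h5 => hu (hab ▸ h5.mul_right b))
    rw [← hab] at h2
    have : b ^ 4 ≤ t ^ 2 := by nlinarith [Nat.zero_le (a ^ 4), Nat.zero_le ((a * b) ^ 2)]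
    zify [this]
    zify at h2
    linear_combination -h2
  · apply no5 b a (t ^ 2 - a ^ 4) (fun h5 => hu (hab ▸ h5.mul_left a))
    rw [← hab] at h2
    have : a ^ 4 ≤ t ^ 2 := by nlinarith [Nat.zero_le (b ^ 4), Nat.zero_le ((a * b) ^ 2)]
    zify [this]
    zify at h2
    linear_combination -h2

theorem descent_s16 (k : ℕ) (hk : k = 1 ∨ k = 5) : ∀ e M N : ℕ, 0 < e → M.Coprime (k * e) →
    N ^ 2 = M ^ 4 + 2 * k * M ^ 2 * e ^ 2 + 5 * k ^ 2 * e ^ 4 → False := by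
  intro e
  induction e using Nat.strong_induction_on with
  | _ e ih =>
  intro M N he hc h
  have hk0 : 0 < k := by rcases hk with rfl | rfl <;> norm_num
  have hce : M.Coprime e := hc.coprime_mul_left_right
  have hodd : (M ^ 2 + k * e ^ 2) % 2 = 1 := by
    by_contra hcon
    have hM := sq_mod4 M
    have hE := sq_mod4 e
    have hpp : M % 2 = e % 2 := by rcases hk with rfl | rfl <;> omega
    rcases Nat.mod_two_eq_zero_or_one M with h0 | h0
    · exact Nat.not_coprime_of_dvd_of_dvd (d := 2) (by norm_num) (Nat.dvd_of_mod_eq_zero h0)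
        (Nat.dvd_of_mod_eq_zero (hpp ▸ h0)) hce
    · obtain ⟨i, hi⟩ := odd_sq8 M h0
      obtain ⟨j, hj⟩ := odd_sq8 e (hpp ▸ h0)
      apply sq_mod16 N
      rw [h, show M ^ 4 = (M ^ 2) ^ 2 by ring, show e ^ 4 = (e ^ 2) ^ 2 by ring, hi, hj]
      rcases hk with rfl | rfl <;> ring_nf <;> omega
  have hg : (M ^ 2 + k * e ^ 2).Coprime (2 * (k * e ^ 2)) := by
    apply Nat.Coprime.mul_right
    · exact Nat.coprime_two_right.2 (Nat.odd_iff.2 hodd)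
    · rw [Nat.coprime_add_self_left]
      apply Nat.Coprime.pow_left
      exact Nat.Coprime.mul_right hc.coprime_mul_right_right (hce.pow_right 2)
  have hN : 0 < N := by
    rcases Nat.eq_zero_or_pos N with rfl | h0
    · have : 0 < 5 * k ^ 2 * e ^ 4 := by positivity
      rw [zero_pow (by norm_num)] at h
      omega
    · exact h0
  have hP : PythagoreanTriple ((M ^ 2 + k * e ^ 2 : ℕ) : ℤ) ((2 * (k * e ^ 2) : ℕ) : ℤ) (N : ℤ) := by
    unfold PythagoreanTriple
    zify at h
    push_cast
    linear_combination -h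
  obtain ⟨m, n, h1, h2, -, h3, h4, h5⟩ := hP.coprime_classification'
    (by rw [Int.gcd_natCast_natCast]; exact hg) (by exact_mod_cast hodd) (by exact_mod_cast hN)
  have hke : 0 < k * e ^ 2 := by positivity
  have hmn : m * n = ((k * e ^ 2 : ℕ) : ℤ) := by push_cast at h2 ⊢; linarith
  have hmn0 : 0 < m * n := by rw [hmn]; exact_mod_cast hke
  have hn0 : 0 ≤ n := (pos_of_mul_pos_right hmn0 h5).le
  lift m to ℕ using h5
  lift n to ℕ using hn0
  have hmn' : m * n = k * e ^ 2 := by exact_mod_cast hmn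
  have hcop : m.Coprime n := by rw [Int.gcd_natCast_natCast] at h3; exact h3
  have hM : M ^ 2 + m * n + n ^ 2 = m ^ 2 := by
    rw [hmn']; zify; push_cast at h1; linarith
  have hkq : k = 1 ∨ IsPrimePow k := by
    rcases hk with rfl | rfl
    · left; rfl
    · right; exact (show Nat.Prime 5 by norm_num).prime.isPrimePow
  obtain ⟨a, b, hab, hfac⟩ := prodS 2 k m n e (by norm_num) hkq hcop hmn'
  have hm4 : m % 2 = 0 → m % 4 = 0 := by
    intro hm
    have := sq_mod4 a
    rcases hfac with ⟨ha, hb⟩ | ⟨ha, hb⟩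
    · omega
    · rcases hk with rfl | rfl <;> omega
  have hpar : m % 2 = 1 ∧ n % 2 = 0 := by
    rcases h4 with ⟨h6, h7⟩ | ⟨h6, h7⟩
    · exfalso
      have h8 := sq_mod4 n
      have h9 := sq_mod4 M
      obtain ⟨m', rfl⟩ : ∃ m', m = 4 * m' := ⟨m / 4, by omega⟩
      have h10 : M ^ 2 + 4 * (m' * n) + n ^ 2 = 4 * (4 * m' ^ 2) := by
        linarith
      omega
    · constructor <;> omega
  have fin : ∀ r t : ℕ, r * t = e → m = r ^ 2 → n = k * t ^ 2 → False := by
    intro r t hrt hm hn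
    subst hm hn
    obtain ⟨a, b, hab, hc', heq⟩ := step1_s16 k hk M r t hcop hpar hM
    have hr : 0 < r := Nat.pos_of_ne_zero (by rintro rfl; simp at hrt; omega)
    have ht : 0 < t := Nat.pos_of_ne_zero (by rintro rfl; simp at hrt; omega)
    have ha : 0 < a := Nat.pos_of_ne_zero (by rintro rfl; simp at hab; omega)
    have hb : 0 < b := Nat.pos_of_ne_zero (by rintro rfl; simp at hab; omega)
    refine ih b ?_ a r hb hc' heq
    have : b ≤ a * b := Nat.le_mul_of_pos_left _ ha
    have : t ≤ r * t := Nat.le_mul_of_pos_left _ hr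
    omega
  rcases hfac with ⟨ha, hb⟩ | ⟨ha, hb⟩
  · exact fin a b hab ha hb
  · rcases hk with rfl | rfl
    · exact fin a b hab (by omega) (by omega)
    · subst ha hb
      exact step2 M b a hcop hpar hM

theorem aux (k : ℕ) (hk : k = 1 ∨ k = 5) (p q Z : ℕ) (hq : 0 < q) (hc : p.Coprime q)
    (h5 : ¬ 5 ∣ p) (h : k * (p * q * (p ^ 2 + 2 * p * q + 5 * q ^ 2)) = Z ^ 2) : False := by
  have p5 : Nat.Prime 5 := by norm_num
  have hcp5 : p.Coprime 5 := ((Nat.Prime.coprime_iff_not_dvd p5).2 h5).symm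
  have hck : p.Coprime k := by 
    rcases hk with rfl | rfl
    · simp
    · exact hcp5
  have hpQ : p.Coprime (p ^ 2 + 2 * p * q + 5 * q ^ 2) := by
    have : p ^ 2 + 2 * p * q + 5 * q ^ 2 = 5 * q ^ 2 + p * (p + 2 * q) := by ring
    rw [this, Nat.coprime_add_mul_left_right]
    exact hcp5.mul_right (hc.pow_right 2)
  have hqQ : q.Coprime (p ^ 2 + 2 * p * q + 5 * q ^ 2) := by
    have : p ^ 2 + 2 * p * q + 5 * q ^ 2 = p ^ 2 + q * (2 * p + 5 * q) := by ring
    rw [this, Nat.coprime_add_mul_left_right]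
    exact hc.symm.pow_right 2
  obtain ⟨M, W, hMW, h1⟩ := prodS 2 1 p (k * (q * (p ^ 2 + 2 * p * q + 5 * q ^ 2))) Z (by norm_num)
    (Or.inl rfl) (hck.mul_right (hc.mul_right hpQ)) (by rw [one_mul, ← h]; ring)
  obtain ⟨hpM, hW⟩ : p = M ^ 2 ∧ k * (q * (p ^ 2 + 2 * p * q + 5 * q ^ 2)) = W ^ 2 := by
    rcases h1 with ⟨h1, h2⟩ | ⟨h1, h2⟩ <;> exact ⟨by omega, by omega⟩
  obtain ⟨V, hV⟩ : ∃ V, q * (p ^ 2 + 2 * p * q + 5 * q ^ 2) = k * V ^ 2 := by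
    rcases hk with rfl | rfl
    · exact ⟨W, by omega⟩
    · obtain ⟨V, rfl⟩ : 5 ∣ W := p5.dvd_of_dvd_pow (hW ▸ Dvd.intro _ rfl)
      exact ⟨V, by apply Nat.eq_of_mul_eq_mul_left (show 0 < 5 by norm_num); rw [hW]; ring⟩
  have hkq : k = 1 ∨ IsPrimePow k := by
    rcases hk with rfl | rfl
    · left; rfl
    · right; exact p5.prime.isPrimePow
  have fin : ∀ e N : ℕ, q = k * e ^ 2 → p ^ 2 + 2 * p * q + 5 * q ^ 2 = N ^ 2 → False := by
    intro e N hqe hN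
    subst hqe hpM
    apply descent_s16 k hk e M N
    · exact Nat.pos_of_ne_zero (by rintro rfl; simp at hq)
    · exact Nat.Coprime.coprime_dvd_left (Dvd.intro M (by ring))
        (hc.coprime_dvd_right ⟨e, by ring⟩)
    · rw [← hN]; ring
  obtain ⟨e, N, -, ⟨ha, hb⟩ | ⟨ha, hb⟩⟩ := prodS 2 k q _ V (by norm_num) hkq hqQ hV
  · rcases hk with rfl | rfl
    · exact fin e N (by omega) (by omega)
    · subst hpM ha
      apply no5 M e (N ^ 2 - e ^ 4) (fun h => h5 (h.trans (Dvd.intro M (by ring))))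
      have : e ^ 4 ≤ N ^ 2 := by
        nlinarith [Nat.zero_le ((M ^ 2) ^ 2), Nat.zero_le (2 * M ^ 2 * e ^ 2)]
      zify [this]
      zify at hb
      linear_combination -hb
  · exact fin e N ha hb

theorem aux2 (k : ℕ) (hk : k = 1 ∨ k = 5) (p q Z : ℕ) (hp : 0 < p) (hq : 0 < q) (hc : p.Coprime q)
    (h : k * (p * q * (p ^ 2 + 2 * p * q + 5 * q ^ 2)) = Z ^ 2) : False := by
  by_cases h5 : 5 ∣ p
  · have p5 : Nat.Prime 5 := by norm_num
    obtain ⟨r, rfl⟩ := h5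
    have hq5 : ¬ 5 ∣ q := fun h =>
      Nat.not_coprime_of_dvd_of_dvd (d := 5) (by norm_num) (Dvd.intro _ rfl) h hc
    have hZ : 5 ∣ Z ^ 2 := by
      rw [← h]
      exact ⟨k * (r * q * ((5 * r) ^ 2 + 2 * (5 * r) * q + 5 * q ^ 2)), by ring⟩
    obtain ⟨V, rfl⟩ : 5 ∣ Z := p5.dvd_of_dvd_pow hZ
    apply aux k hk q r V (by omega) hc.symm.coprime_mul_left_right hq5
    apply Nat.eq_of_mul_eq_mul_left (show 0 < 25 by norm_num)
    linarith
  · exact aux k hk p q Z hq hc h5 h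

theorem ratPts (k : ℚ) (hk : k = 1 ∨ k = 5) (x y : ℚ) (h : k * y ^ 2 = x * (x ^ 2 + 2 * x + 5)) :
    x = 0 := by
  by_contra hx
  have hQ : 0 < x ^ 2 + 2 * x + 5 := by nlinarith [sq_nonneg (x + 1)]
  have hk0 : 0 < k := by rcases hk with rfl | rfl <;> norm_num
  have hx0 : 0 < x := by
    have : 0 ≤ x := nonneg_of_mul_nonneg_left (h ▸ by positivity) hQ
    exact lt_of_le_of_ne this (Ne.symm hx)
  obtain ⟨K, hK, hkK⟩ : ∃ K : ℕ, (K : ℚ) = k ∧ (K = 1 ∨ K = 5) := by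
    rcases hk with rfl | rfl
    · exact ⟨1, by norm_num, by simp⟩
    · exact ⟨5, by norm_num, by simp⟩
  obtain ⟨p, hp⟩ : ∃ p : ℕ, (p : ℤ) = x.num := ⟨x.num.toNat, Int.toNat_of_nonneg (Rat.num_pos.2 hx0).le⟩
  have hp0 : 0 < p := by have := Rat.num_pos.2 hx0; omega
  have hc : p.Coprime x.den := by have := x.reduced; rwa [← hp] at this
  have hxe : x = p / x.den := by
    have h1 : (p : ℚ) = x.num := by exact_mod_cast hp
    rw [h1]; exact (Rat.num_div_den x).symm
  have hq0 : 0 < x.den := x.den_pos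
  generalize x.den = q at *
  have hq' : (q : ℚ) ≠ 0 := by positivity
  have hsq : IsSquare ((K * (p * q * (p ^ 2 + 2 * p * q + 5 * q ^ 2)) : ℕ) : ℚ) := by
    refine ⟨k * y * q ^ 2, ?_⟩
    push_cast
    rw [hK]
    have : k * y * q ^ 2 * (k * y * q ^ 2) = k * q ^ 4 * (k * y ^ 2) := by ring
    rw [this, h, hxe]
    field_simp
  rw [Rat.isSquare_natCast_iff] at hsq
  obtain ⟨Z, hZ⟩ := hsq
  exact aux2 K hkK p q Z hp0 hq0 hc (by rw [hZ]; ring)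

theorem final (hA : ∀ k : ℚ, k = 1 ∨ k = 5 → ∀ x y : ℚ, k * y ^ 2 = x * (x ^ 2 + 2 * x + 5) → x = 0)
   (a b c d : ℚ) (hR : c ^ 2 + 5 * d ^ 2 = a^3+15*a*b^2+2*a^2+10*b^2+5*a)
   (hI : 2 * c * d = 3*a^2*b+5*b^3+4*a*b+5*b) : a = 0 ∧ b = 0 := by
  have hb : b = 0 := by
    by_contra hb
    have h1 : (d / b) ^ 2 - 2 - 2 * a = 0 := by
      apply hA 1 (Or.inl rfl) _ (c + d / b * ((d / b) ^ 2 - 2 - 2 * a - a))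
      obtain ⟨l, rfl⟩ : ∃ l, d = l * b := ⟨d / b, by field_simp⟩
      rw [mul_div_cancel_right₀ _ hb]
      have hI' : 2 * c * l = 3*a^2+5*b^2+4*a+5 := by
        apply mul_right_cancel₀ hb; linear_combination hI
      linear_combination hR + (l ^ 2 - 2 - 2 * a - a) * hI'
    have h2 : 5 * (c / (5 * b)) ^ 2 - 2 - 2 * a = 0 := by
      apply hA 5 (Or.inr rfl) _ (d + c / (5 * b) * (5 * (c / (5 * b)) ^ 2 - 2 - 2 * a - a))
      obtain ⟨l, rfl⟩ : ∃ l, c = l * (5 * b) := ⟨c / (5 * b), by field_simp⟩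
      rw [mul_div_cancel_right₀ _ (by simpa using hb)]
      have hI' : 10 * d * l = 3*a^2+5*b^2+4*a+5 := by
        apply mul_right_cancel₀ hb; linear_combination hI
      linear_combination hR + (5 * l ^ 2 - 2 - 2 * a - a) * hI'
    have h3 : c ^ 2 = 5 * d ^ 2 := by
      field_simp at h1 h2
      linear_combination h2 - 5 * h1
    have hd : d = 0 := by
      by_contra hd
      have h5 : IsSquare ((5 : ℕ) : ℚ) := ⟨c / d, by field_simp; push_cast; linarith⟩
      rw [Rat.isSquare_natCast_iff] at h5
      obtain ⟨r, hr⟩ := h5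
      have : r < 3 := by nlinarith
      interval_cases r <;> omega
    subst hd
    have hc : c = 0 := by simpa using h3
    subst hc
    have ha : a = -1 := by
      simp at h1; linarith
    subst ha
    have : b * (5 * b ^ 2 + 4) = 0 := by linear_combination -hI
    rcases mul_eq_zero.1 this with h | h
    · exact hb h
    · nlinarith [sq_nonneg b]
  subst hb
  refine ⟨?_, rfl⟩
  have : c * d = 0 := by linear_combination hI / 2
  rcases mul_eq_zero.1 this with rfl | rfl
  · exact hA 5 (Or.inr rfl) a d (by linear_combination hR)
  · exact hA 1 (Or.inl rfl) a c (by linear_combination hR)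

theorem repr5 (z : ℚ⟮(Real.sqrt 5 : ℝ)⟯) : ∃ a b : ℚ, (z : ℝ) = a + b * Real.sqrt 5 := by
  have h5 : Real.sqrt 5 ^ 2 = 5 := Real.sq_sqrt (by norm_num)
  obtain ⟨z, hz⟩ := z
  induction hz using IntermediateField.adjoin_induction with
  | mem x hx => 
    rw [Set.mem_singleton_iff] at hx
    exact ⟨0, 1, by simp [hx]⟩
  | algebraMap x => exact ⟨x, 0, by simp⟩
  | add x y _ _ h1 h2 =>
    obtain ⟨a, b, h1⟩ := h1
    obtain ⟨c, d, h2⟩ := h2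
    exact ⟨a + c, b + d, by simp only at *; rw [h1, h2]; push_cast; ring⟩
  | mul x y _ _ h1 h2 =>
    obtain ⟨a, b, h1⟩ := h1
    obtain ⟨c, d, h2⟩ := h2
    exact ⟨a * c + 5 * b * d, a * d + b * c, by
      simp only at *; rw [h1, h2]; push_cast; linear_combination (b * d : ℝ) * h5⟩
  | inv x _ h1 =>
    obtain ⟨a, b, h1⟩ := h1
    simp only at *
    by_cases hx : x = 0
    · exact ⟨0, 0, by simp [hx]⟩
    refine ⟨a / (a ^ 2 - 5 * b ^ 2), - b / (a ^ 2 - 5 * b ^ 2), ?_⟩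
    have hn : (a ^ 2 - 5 * b ^ 2 : ℝ) ≠ 0 := by
      intro hn
      have hn' : a ^ 2 - 5 * b ^ 2 = 0 := by exact_mod_cast hn
      have hb : b = 0 := by
        by_contra hd
        have h5 : IsSquare ((5 : ℕ) : ℚ) := ⟨a / b, by field_simp; push_cast; linarith⟩
        rw [Rat.isSquare_natCast_iff] at h5
        obtain ⟨r, hr⟩ := h5
        have : r < 3 := by nlinarith
        interval_cases r <;> omega
      subst hb
      have : a = 0 := by simpa using hn'
      subst this
      simp [h1] at hx
    symm
    apply eq_inv_of_mul_eq_one_left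
    rw [h1]; push_cast; field_simp; linear_combination (-b^2 : ℝ) * h5

theorem coeff5 (a b c d : ℚ) (h : (a + b * Real.sqrt 5 : ℝ) = c + d * Real.sqrt 5) : a = c ∧ b = d := by
  have hb : b = d := by
    by_contra hb
    have hb' : (b - d : ℝ) ≠ 0 := by
      intro h; apply hb; have : (b : ℝ) = d := by linarith
      exact_mod_cast this
    have hirr : Irrational (Real.sqrt 5) := by
      have := Nat.Prime.irrational_sqrt (p := 5) (by norm_num)
      exact_mod_cast this
    apply hirr
    refine ⟨(c - a) / (b - d), ?_⟩
    push_cast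
    rw [div_eq_iff hb']
    linear_combination -h
  subst hb
  refine ⟨?_, rfl⟩
  have : (a : ℝ) = c := by linarith
  exact_mod_cast this

theorem curveK (hA : ∀ k : ℚ, k = 1 ∨ k = 5 → ∀ x y : ℚ, k * y ^ 2 = x * (x ^ 2 + 2 * x + 5) → x = 0)
    (x y : ℚ⟮(Real.sqrt 5 : ℝ)⟯) (h : y ^ 2 = x * (x ^ 2 + 2 * x + 5)) : x = 0 := by
  have h5 : Real.sqrt 5 ^ 2 = 5 := Real.sq_sqrt (by norm_num)
  obtain ⟨a, b, hx⟩ := repr5 x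
  obtain ⟨c, d, hy⟩ := repr5 y
  have h' : (y : ℝ) ^ 2 = x * ((x : ℝ) ^ 2 + 2 * x + 5) := congrArg (Subtype.val) h
  rw [hx, hy] at h'
  obtain ⟨h1, h2⟩ := coeff5 (c ^ 2 + 5 * d ^ 2) (2 * c * d) (a^3+15*a*b^2+2*a^2+10*b^2+5*a) (3*a^2*b+5*b^3+4*a*b+5*b) (by
    push_cast
    linear_combination h' - d^2 * h5 + (3 * a * b^2 + 2 * b^2 + b ^ 3 * Real.sqrt 5 : ℝ) * h5)
  obtain ⟨rfl, rfl⟩ := final hA a b c d h1 h2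
  apply Subtype.ext
  simpa using hx

/-- The determination of `K = ℚ(√5)`-points of the genus-one curve
`-5y² = 2(x² + x - 1)(x² + (7/2)x + 27/8)` used in the proof of Proposition 7.2:
any such point has `y = 0` and `x² + x - 1 = 0`, i.e. `x = (-1 ± √5)/2`. -/
theorem stmt_16 (x y : ℚ⟮(Real.sqrt 5 : ℝ)⟯)
    (h : -5 * y ^ 2 = 2 * (x ^ 2 + x - 1) * (x ^ 2 + (7 / 2) * x + 27 / 8)) :
    y = 0 ∧ x ^ 2 + x - 1 = 0 ∧
      ((x : ℝ) = (-1 + Real.sqrt 5) / 2 ∨ (x : ℝ) = (-1 - Real.sqrt 5) / 2) := by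
  obtain ⟨s, hs⟩ : ∃ s : ℚ⟮(Real.sqrt 5 : ℝ)⟯, (s : ℝ) = Real.sqrt 5 :=
    ⟨⟨_, IntermediateField.mem_adjoin_simple_self ℚ _⟩, rfl⟩
  have h5 : s ^ 2 = 5 := by
    apply Subtype.ext
    have : Real.sqrt 5 ^ 2 = 5 := Real.sq_sqrt (by norm_num)
    push_cast
    rw [hs, this]; norm_cast
  have hx : x = (-1 + s) / 2 ∨ x = (-1 - s) / 2 := by
    by_cases hb : x - (-1 - s) / 2 = 0
    · right; linear_combination hb
    left
    obtain ⟨n, hn⟩ : ∃ n, n = x - (-1 + s) / 2 := ⟨_, rfl⟩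
    obtain ⟨D, hD⟩ : ∃ D, D = x - (-1 - s) / 2 := ⟨_, rfl⟩
    have e1 : x ^ 2 + x - 1 = n * D := by rw [hn, hD]; linear_combination h5 / 4
    have e2 : (5 - 2 * s) * n ^ 2 - 2 * n * D + (5 + 2 * s) * D ^ 2
        = 8 * x ^ 2 + 28 * x + 27 := by
      rw [hn, hD]; linear_combination (4 * x + 5) * h5
    rw [← hD] at hb
    have key : 100 * y ^ 2 * (s - 2) ^ 2 = -(5 - 2 * s) * n * D *
        ((5 - 2 * s) ^ 2 * n ^ 2 - 2 * (5 - 2 * s) * n * D + 5 * D ^ 2) := by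
      have h' : 100 * y ^ 2 = - 5 * (n * D) *
          ((5 - 2 * s) * n ^ 2 - 2 * n * D + (5 + 2 * s) * D ^ 2) := by
        rw [e2, ← e1]; linear_combination -20 * h
      have e3 : 5 * (s - 2) ^ 2 = (5 - 2 * s) ^ 2 := by linear_combination h5
      have e4 : (5 - 2 * s) * (5 + 2 * s) = 5 := by linear_combination -4 * h5
      linear_combination (s - 2) ^ 2 * h' - (n * D) *
          ((5 - 2 * s) * n ^ 2 - 2 * n * D + (5 + 2 * s) * D ^ 2) * e3
          - (5 - 2 * s) * n * D * D ^ 2 * e4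
    have := curveK ratPts (-(5 - 2 * s) * n / D)
      (10 * y * (s - 2) / D ^ 2) (by
        have : (10 * y * (s - 2) / D ^ 2) ^ 2 = (100 * y ^ 2 * (s - 2) ^ 2) / D ^ 4 := by ring
        rw [this, key, div_eq_iff (pow_ne_zero 4 hb)]
        generalize 5 - 2 * s = c
        field_simp
        ring)
    rw [div_eq_zero_iff, or_iff_left hb, mul_eq_zero] at this
    rcases this with h0 | h0
    · exfalso
      have : (5 : ℚ⟮(Real.sqrt 5 : ℝ)⟯) = 0 := by linear_combination -(5 + 2 * s) * h0 + 4 * h5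
      norm_num at this
    · rw [hn] at h0; linear_combination h0
  have h0 : x ^ 2 + x - 1 = 0 := by
    rcases hx with rfl | rfl <;> linear_combination h5 / 4
  refine ⟨?_, h0, ?_⟩
  · rw [h0] at h
    simpa using h
  · rcases hx with h | h
    · left; rw [h]; push_cast; rw [hs]; rfl
    · right; rw [h]; push_cast; rw [hs]; rfl
end
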